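/- Quantitative subject reduction and subject expansion for checkers multi types: let t, t' be checkers terms with t →hch t'. (1) If π ▷ Γ ⊢^k t : L then there is a derivation π' ▷ Γ ⊢^{k'} t' : L with |π'| = |π| − 1; moreover k' = k − 1 if the step is an interaction head step (t →h⊛ t') and k' = k if it is a silent head step (t →hτ t'). (2) Conversely, if Γ ⊢^{k'} t' : L is derivable then Γ ⊢^{k} t : L is derivable for some k. -/

import Mathlib

set_option autoImplicit false

/-! ### Players -/

inductive Player : Type
  | white
  | black
deriving DecidableEq

/-- The opposite player. -/
def Player.op : Player → Player
  | .white => .black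
  | .black => .white

/-- `gamma p q` is `0` if the players agree (silent) and `1` otherwise (interaction). -/
def Player.gamma (p q : Player) : ℕ := if p = q then 0 else 1

/-! ### Ordinary λ-terms (de Bruijn representation) -/

inductive Lam : Type
  | var : ℕ → Lam
  | lam : Lam → Lam
  | app : Lam → Lam → Lam
deriving DecidableEq

namespace Lam

/-- Shift the free de Bruijn indices ≥ `d` by one. -/
def liftAt : Lam → ℕ → Lam
  | .var n, d => .var (if n < d then n else n + 1)
  | .lam t, d => .lam (t.liftAt (d + 1))
  | .app t u, d => .app (t.liftAt d) (u.liftAt d)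

/-- Capture-avoiding substitution of `u` for the de Bruijn index `x`. -/
def subst : Lam → ℕ → Lam → Lam
  | .var n, x, u => if n = x then u else if x < n then .var (n - 1) else .var n
  | .lam t, x, u => .lam (t.subst (x + 1) (u.liftAt 0))
  | .app t s, x, u => .app (t.subst x u) (s.subst x u)

end Lam

/-- Root β-rule: `(λx.t) u ↦ t[x:=u]`. -/
inductive LBetaRoot : Lam → Lam → Prop
  | beta (t u : Lam) : LBetaRoot (.app (.lam t) u) (t.subst 0 u)

/-- Root η-rule: `λx. t x ↦ t` with `x ∉ FV(t)` (enforced by the lifting). -/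
inductive LEtaRoot : Lam → Lam → Prop
  | eta (t : Lam) : LEtaRoot (.lam (.app (t.liftAt 0) (.var 0))) t

/-- Closure of a root relation under all contexts. -/
inductive LFull (R : Lam → Lam → Prop) : Lam → Lam → Prop
  | root {t u : Lam} : R t u → LFull R t u
  | lam {t u : Lam} : LFull R t u → LFull R (.lam t) (.lam u)
  | appL {t t' : Lam} (u : Lam) : LFull R t t' → LFull R (.app t u) (.app t' u)
  | appR (t : Lam) {u u' : Lam} : LFull R u u' → LFull R (.app t u) (.app t u')

/-- Closure under applicative spine contexts `⟨·⟩ t1 … tk`. -/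
inductive LSpine (R : Lam → Lam → Prop) : Lam → Lam → Prop
  | root {t u : Lam} : R t u → LSpine R t u
  | appL {t t' : Lam} (u : Lam) : LSpine R t t' → LSpine R (.app t u) (.app t' u)

/-- Closure under head contexts `λx1…xn.⟨·⟩ t1 … tk`. -/
inductive LHead (R : Lam → Lam → Prop) : Lam → Lam → Prop
  | spine {t u : Lam} : LSpine R t u → LHead R t u
  | lam {t u : Lam} : LHead R t u → LHead R (.lam t) (.lam u)

/-- β-reduction. -/
def LBeta : Lam → Lam → Prop := LFull LBetaRoot
/-- η-reduction. -/
def LEta : Lam → Lam → Prop := LFull LEtaRoot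
/-- Head reduction. -/
def LHStep : Lam → Lam → Prop := LHead LBetaRoot
/-- Multistep head reduction. -/
def LHSteps : Lam → Lam → Prop := Relation.ReflTransGen LHStep

/-- β-conversion (reflexive-symmetric-transitive closure of β-reduction). -/
def LBetaConv : Lam → Lam → Prop :=
  Relation.ReflTransGen (fun a b => LBeta a b ∨ LBeta b a)
/-- η-conversion. -/
def LEtaConv : Lam → Lam → Prop :=
  Relation.ReflTransGen (fun a b => LEta a b ∨ LEta b a)

/-- Head normal forms: no head step out of `t`. -/
def Lam.LHNF (t : Lam) : Prop := ∀ u, ¬ LHStep t u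

/-- Head convergence: `t ⇓h`. -/
def Lam.HConv (t : Lam) : Prop := ∃ h, LHSteps t h ∧ h.LHNF

/-- Ordinary contexts (one hole). -/
inductive LCtx : Type
  | hole : LCtx
  | lam : LCtx → LCtx
  | appL : LCtx → Lam → LCtx
  | appR : Lam → LCtx → LCtx

/-- Plugging (allowing variable capture). -/
def LCtx.fill : LCtx → Lam → Lam
  | .hole, t => t
  | .lam C, t => .lam (C.fill t)
  | .appL C u, t => .app (C.fill t) u
  | .appR s C, t => .app s (C.fill t)

/-- Head contextual preorder on λ-terms. -/
def CtxLe (t u : Lam) : Prop := ∀ C : LCtx, (C.fill t).HConv → (C.fill u).HConv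

/-! ### Checkers terms -/

inductive CTerm : Type
  | var : ℕ → CTerm
  | lam : Player → CTerm → CTerm
  | app : Player → CTerm → CTerm → CTerm
deriving DecidableEq

namespace CTerm

/-- Shift the free de Bruijn indices ≥ `d` by one. -/
def liftAt : CTerm → ℕ → CTerm
  | .var n, d => .var (if n < d then n else n + 1)
  | .lam p t, d => .lam p (t.liftAt (d + 1))
  | .app p t u, d => .app p (t.liftAt d) (u.liftAt d)

/-- Capture-avoiding substitution of `u` for the de Bruijn index `x`. -/
def subst : CTerm → ℕ → CTerm → CTerm
  | .var n, x, u => if n = x then u else if x < n then .var (n - 1) else .var n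
  | .lam p t, x, u => .lam p (t.subst (x + 1) (u.liftAt 0))
  | .app p t s, x, u => .app p (t.subst x u) (s.subst x u)

/-- The underlying ordinary λ-term of a checkers term. -/
def untag : CTerm → Lam
  | .var n => .var n
  | .lam _ t => .lam t.untag
  | .app _ t u => .app t.untag u.untag

end CTerm

/-- Player lifting: tag every abstraction and application with player `p`. -/
def Lam.tag : Lam → Player → CTerm
  | .var n, _ => .var n
  | .lam t, p => .lam p (t.tag p)
  | .app t u, p => .app p (t.tag p) (u.tag p)

/-- Silent β root rule: the abstraction and the application carry the same player. -/
inductive SilentRoot : CTerm → CTerm → Prop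
  | beta (p : Player) (t u : CTerm) : SilentRoot (.app p (.lam p t) u) (t.subst 0 u)

/-- Interaction β root rule: the application carries the opposite player of the abstraction. -/
inductive InterRoot : CTerm → CTerm → Prop
  | beta (p : Player) (t u : CTerm) : InterRoot (.app p.op (.lam p t) u) (t.subst 0 u)

/-- Closure of a root relation under all checkers contexts. -/
inductive CFull (R : CTerm → CTerm → Prop) : CTerm → CTerm → Prop
  | root {t u : CTerm} : R t u → CFull R t u
  | lam (p : Player) {t u : CTerm} : CFull R t u → CFull R (.lam p t) (.lam p u)
  | appL (p : Player) {t t' : CTerm} (u : CTerm) : CFull R t t' → CFull R (.app p t u) (.app p t' u)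
  | appR (p : Player) (t : CTerm) {u u' : CTerm} : CFull R u u' → CFull R (.app p t u) (.app p t u')

/-- Closure under applicative spine contexts `⟨·⟩ @_{q1} t1 … @_{qk} tk`. -/
inductive CSpine (R : CTerm → CTerm → Prop) : CTerm → CTerm → Prop
  | root {t u : CTerm} : R t u → CSpine R t u
  | appL (p : Player) {t t' : CTerm} (u : CTerm) : CSpine R t t' → CSpine R (.app p t u) (.app p t' u)

/-- Closure under checkers head contexts `λ_{p1}x1…λ_{pn}xn.⟨·⟩ @_{q1} t1 … @_{qk} tk`. -/
inductive CHead (R : CTerm → CTerm → Prop) : CTerm → CTerm → Prop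
  | spine {t u : CTerm} : CSpine R t u → CHead R t u
  | lam (p : Player) {t u : CTerm} : CHead R t u → CHead R (.lam p t) (.lam p u)

/-- Silent β-reduction `→τ`. -/
def StepTau : CTerm → CTerm → Prop := CFull SilentRoot
/-- Interaction β-reduction `→⊛`. -/
def StepInt : CTerm → CTerm → Prop := CFull InterRoot
/-- Checkers β-reduction `→βch`. -/
def StepBch (t u : CTerm) : Prop := StepTau t u ∨ StepInt t u

/-- Silent head reduction `→hτ`. -/
def HStepTau : CTerm → CTerm → Prop := CHead SilentRoot
/-- Interaction head reduction `→h⊛`. -/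
def HStepInt : CTerm → CTerm → Prop := CHead InterRoot
/-- Checkers head reduction `→hch`. -/
def HStepCh (t u : CTerm) : Prop := HStepTau t u ∨ HStepInt t u

/-- Checkers head normal form. -/
def CTerm.HNF (t : CTerm) : Prop := ∀ u, ¬ HStepCh t u

/-- `BigStep t k` means `t ⇓^k`: the (deterministic) checkers head evaluation of `t`
terminates and performs exactly `k` interaction steps. -/
inductive BigStep : CTerm → ℕ → Prop
  | nf {t : CTerm} : t.HNF → BigStep t 0
  | silent {t u : CTerm} {k : ℕ} : HStepTau t u → BigStep u k → BigStep t k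
  | inter {t u : CTerm} {k : ℕ} : HStepInt t u → BigStep u k → BigStep t (k + 1)

/-- `HRed t n i u`: a checkers head reduction sequence from `t` to `u` of length `n`
containing exactly `i` interaction steps. -/
inductive HRed : CTerm → ℕ → ℕ → CTerm → Prop
  | refl (t : CTerm) : HRed t 0 0 t
  | silent {t u s : CTerm} {n i : ℕ} : HStepTau t u → HRed u n i s → HRed t (n + 1) i s
  | inter {t u s : CTerm} {n i : ℕ} : HStepInt t u → HRed u n i s → HRed t (n + 1) (i + 1) s

/-- Checkers contexts (one hole). -/
inductive CCtx : Type
  | hole : CCtx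
  | lam : Player → CCtx → CCtx
  | appL : Player → CCtx → CTerm → CCtx
  | appR : Player → CTerm → CCtx → CCtx

/-- Plugging (allowing variable capture). -/
def CCtx.fill : CCtx → CTerm → CTerm
  | .hole, t => t
  | .lam p C, t => .lam p (C.fill t)
  | .appL p C u, t => .app p (C.fill t) u
  | .appR p s C, t => .app p s (C.fill t)

/-- Player lifting of ordinary contexts. -/
def LCtx.tag : LCtx → Player → CCtx
  | .hole, _ => .hole
  | .lam C, p => .lam p (C.tag p)
  | .appL C u, p => .appL p (C.tag p) (u.tag p)
  | .appR s C, p => .appR p (s.tag p) (C.tag p)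

/-- Checkers interaction preorder `≼ctx⊛` on checkers terms. -/
def IntCtxLe (t u : CTerm) : Prop :=
  ∀ (C : CCtx) (k : ℕ), BigStep (C.fill t) k → BigStep (C.fill u) k

/-- Checkers interaction improvement `≼imp⊛` on checkers terms. -/
def ImpCtxLe (t u : CTerm) : Prop :=
  ∀ (C : CCtx) (k : ℕ), BigStep (C.fill t) k → ∃ k', k' ≤ k ∧ BigStep (C.fill u) k'

/-- Interaction preorder `⊑int` on ordinary λ-terms, via black lifting. -/
def IntLe (t u : Lam) : Prop := IntCtxLe (t.tag .black) (u.tag .black)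

/-- Interaction improvement `⊑int·imp` on ordinary λ-terms, via black lifting. -/
def ImpLe (t u : Lam) : Prop := ImpCtxLe (t.tag .black) (u.tag .black)

/-- Interaction equivalence `≡int`. -/
def IntEq (t u : Lam) : Prop := IntLe t u ∧ IntLe u t

/-- Silent conversion `=τ`: reflexive-symmetric-transitive closure of `→τ`. -/
def SilentConv : CTerm → CTerm → Prop :=
  Relation.ReflTransGen (fun a b => StepTau a b ∨ StepTau b a)


/-! ### Checkers multi types -/

/-- Linear types: an atom `X` and arrows `M →_{p,q} L`, where a multi type `M`
is a finite multiset of linear types (syntactically represented as a list). -/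
inductive LType : Type
  | atom : LType
  | arrow : List LType → Player → Player → LType → LType

/-- Type environments: a multi type for every de Bruijn index. -/
abbrev TEnv : Type := ℕ → Multiset LType

/-- The empty type environment. -/
def TEnv.zero : TEnv := fun _ => 0

/-- Pointwise multiset union of type environments. -/
def TEnv.add (Γ Δ : TEnv) : TEnv := fun n => Γ n + Δ n

/-- The environment assigning `[L]` to `x` and `0` elsewhere. -/
def TEnv.single (x : ℕ) (L : LType) : TEnv := fun n => if n = x then {L} else 0

/-- Extend an environment with a multi type for the freshly bound de Bruijn index `0`. -/
def TEnv.cons (M : Multiset LType) (Γ : TEnv) : TEnv := fun n =>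
  match n with
  | 0 => M
  | n + 1 => Γ n

mutual
  /-- Type derivations `π ▷ Γ ⊢^k t : L` of the checkers multi type system. -/
  inductive Deriv : TEnv → ℕ → CTerm → LType → Type
    | ax (x : ℕ) (L : LType) : Deriv (TEnv.single x L) 0 (.var x) L
    | lam {Γ : TEnv} {k : ℕ} {t : CTerm} {L : LType} (p q : Player) (M : List LType) :
        Deriv (TEnv.cons (Multiset.ofList M) Γ) k t L →
        Deriv Γ k (.lam p t) (.arrow M p q L)
    | app {Γ Δ : TEnv} {k₁ k₂ : ℕ} {t u : CTerm} {M : List LType} {p q : Player} {L : LType} :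
        Deriv Γ k₁ t (.arrow M p q L) → DerivM Δ k₂ u M →
        Deriv (TEnv.add Γ Δ) (k₁ + k₂ + Player.gamma p q) (.app q t u) L
  /-- Derivations `Γ ⊢^k t : M` of a multi type (the `many` rule). -/
  inductive DerivM : TEnv → ℕ → CTerm → List LType → Type
    | nil (t : CTerm) : DerivM TEnv.zero 0 t []
    | cons {Γ Δ : TEnv} {k k' : ℕ} {t : CTerm} {L : LType} {M : List LType} :
        Deriv Γ k t L → DerivM Δ k' t M → DerivM (TEnv.add Γ Δ) (k + k') t (L :: M)
end

mutual
  /-- The (applicative) size `|π|` of a derivation: its number of `@` rules. -/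
  def Deriv.size {Γ : TEnv} {k : ℕ} {t : CTerm} {L : LType} : Deriv Γ k t L → ℕ
    | .ax _ _ => 0
    | .lam _ _ _ π => Deriv.size π
    | .app π μ => Deriv.size π + DerivM.size μ + 1
  /-- Size of a multi-type derivation. -/
  def DerivM.size {Γ : TEnv} {k : ℕ} {t : CTerm} {M : List LType} : DerivM Γ k t M → ℕ
    | .nil _ => 0
    | .cons π μ => Deriv.size π + DerivM.size μ
end

/-- Typability `Γ ⊢^k t : L`. -/
def TJ (Γ : TEnv) (k : ℕ) (t : CTerm) (L : LType) : Prop := Nonempty (Deriv Γ k t L)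

/-- Checkers relational interpretation `⟦t⟧⊛ = {(Γ, k, L) | Γ ⊢^k t : L}`. -/
def CSem (t : CTerm) : Set (TEnv × ℕ × LType) := {x | TJ x.1 x.2.1 t x.2.2}

/-- Black type preorder `⊑•type` on ordinary λ-terms. -/
def BTypeLe (t u : Lam) : Prop := CSem (t.tag .black) ⊆ CSem (u.tag .black)

/-! ### Tight typings -/

/-- All arrows occurring in a linear type are silent (`p = q`). -/
inductive AllSilent : LType → Prop
  | atom : AllSilent .atom
  | arrow {M : List LType} {p : Player} {L : LType} :
      (∀ L' ∈ M, AllSilent L') → AllSilent L → AllSilent (.arrow M p p L)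

/-- The number of nonempty multi types occurring in a linear type. -/
def LType.neCount : LType → ℕ
  | .atom => 0
  | .arrow M _ _ L =>
      min M.length 1 + (M.attach.map fun x => LType.neCount x.1).sum + LType.neCount L
decreasing_by
  · have := List.sizeOf_lt_of_mem x.2
    simp only [LType.arrow.sizeOf_spec]
    omega
  · simp only [LType.arrow.sizeOf_spec]
    omega

/-- The number of nonempty multi types occurring in a multi type (counting itself). -/
def mNeCount (m : Multiset LType) : ℕ :=
  min (Multiset.card m) 1 + (m.map LType.neCount).sum

/-- A typing `(Γ, L)` is tight when all the multi types occurring in `Γ` and `L`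
are empty except for exactly one, and all arrows occurring in `(Γ, L)` are silent. -/
def Tight (Γ : TEnv) (L : LType) : Prop :=
  AllSilent L ∧ (∀ n : ℕ, ∀ L' ∈ Γ n, AllSilent L') ∧
    ∃ S : Finset ℕ, (∀ n : ℕ, n ∉ S → Γ n = 0) ∧
      (∑ n ∈ S, mNeCount (Γ n)) + LType.neCount L = 1

/-! ### Weights: environment, interaction count and size, bundled as an additive monoid -/

abbrev Wt : Type := TEnv × ℕ × ℕ

/-- `w ⊢ t : L`, with the size recorded in the weight. -/
def J (w : Wt) (t : CTerm) (L : LType) : Prop :=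
  ∃ π : Deriv w.1 w.2.1 t L, π.size = w.2.2

def JM (w : Wt) (t : CTerm) (M : List LType) : Prop :=
  ∃ π : DerivM w.1 w.2.1 t M, π.size = w.2.2

/-- Insert the multi type `m` at index `x`. -/
def insE (x : ℕ) (m : Multiset LType) (Γ : TEnv) : TEnv := fun n =>
  if n < x then Γ n else if n = x then m else Γ (n - 1)

def delE (x : ℕ) (Γ : TEnv) : TEnv := fun n => if n < x then Γ n else Γ (n + 1)

def insW (x : ℕ) (m : Multiset LType) (w : Wt) : Wt := (insE x m w.1, w.2)
def delW (x : ℕ) (w : Wt) : Wt := (delE x w.1, w.2)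
/-- The weight of an application rule. -/
def cW (p q : Player) : Wt := (0, Player.gamma p q, 1)

theorem insE_delE (x : ℕ) (Γ : TEnv) : insE x (Γ x) (delE x Γ) = Γ := by
  funext n
  by_cases h : n < x
  · simp [insE, delE, h]
  · by_cases h1 : n = x
    · simp [insE, h1]
    · have h2 : ¬ n - 1 < x := by omega
      have h3 : n - 1 + 1 = n := by omega
      simp [insE, delE, h, h1, h2, h3]

theorem delE_insE (x : ℕ) (m : Multiset LType) (Γ : TEnv) : delE x (insE x m Γ) = Γ := by
  funext n
  by_cases h : n < x
  · simp [insE, delE, h]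
  · have h2 : ¬ n + 1 < x := by omega
    have h3 : n + 1 ≠ x := by omega
    simp [insE, delE, h, h2, h3]

theorem insW_delW (x : ℕ) (w : Wt) : w = insW x (w.1 x) (delW x w) := by
  rcases w with ⟨Γ, k⟩
  simp [insW, delW, insE_delE]

theorem exists_insW (x : ℕ) (w : Wt) : ∃ m v, w = insW x m v := ⟨_, _, insW_delW x w⟩

theorem insW_inj {x : ℕ} {m m' : Multiset LType} {w w' : Wt} (h : insW x m w = insW x m' w') :
    m = m' ∧ w = w' := by
  constructor
  · have := congrFun (congrArg Prod.fst h) x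
    simpa [insW, insE] using this
  · have h1 := congrArg (delW x) h
    simpa [insW, delW, delE_insE] using h1

theorem insW_add (x : ℕ) (m m' : Multiset LType) (w w' : Wt) :
    insW x (m + m') (w + w') = insW x m w + insW x m' w' := by
  refine Prod.ext ?_ rfl
  funext n
  simp only [insW, insE, Prod.fst_add, Pi.add_apply]
  split_ifs <;> rfl

theorem insW_c (x : ℕ) (p q : Player) : insW x 0 (cW p q) = cW p q := by
  refine Prod.ext ?_ rfl
  funext n
  simp [insW, insE, cW]

theorem insW_zero (x : ℕ) : insW x 0 0 = 0 := by
  refine Prod.ext ?_ rfl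
  funext n
  simp [insW, insE]

theorem insW_add_c (x : ℕ) (m m' : Multiset LType) (w w' : Wt) (p q : Player) :
    insW x (m + m') (w + w' + cW p q) = insW x m w + insW x m' w' + cW p q := by
  conv_rhs => rw [← insW_c x p q, ← insW_add, ← insW_add, add_zero]

theorem insW_comm (x : ℕ) (m N : Multiset LType) (w : Wt) :
    insW (x + 1) m (insW 0 N w) = insW 0 N (insW x m w) := by
  refine Prod.ext ?_ rfl
  funext n
  rcases n with _ | n
  · simp [insW, insE]
  · simp only [insW, insE]
    by_cases h1 : n < x
    · simp [h1]
    · by_cases h2 : n = x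
      · simp [h2]
      · have : n ≠ 0 := by omega
        simp [h1, h2, this]

def axW (x : ℕ) (L : LType) : Wt := (TEnv.single x L, 0, 0)

theorem insW_ax_self (x : ℕ) (L : LType) : axW x L = insW x {L} 0 := by
  refine Prod.ext ?_ rfl
  funext n
  simp only [axW, insW, insE, TEnv.single]
  split_ifs <;> first | rfl | omega

theorem insW_ax_lt {y x : ℕ} (h : y < x) (L : LType) : axW y L = insW x 0 (axW y L) := by
  refine Prod.ext ?_ rfl
  funext n
  simp only [axW, insW, insE, TEnv.single]
  split_ifs <;> first | rfl | omega

theorem insW_ax_ge {y x : ℕ} (h : x ≤ y) (L : LType) : axW (y + 1) L = insW x 0 (axW y L) := by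
  refine Prod.ext ?_ rfl
  funext n
  simp only [axW, insW, insE, TEnv.single]
  split_ifs <;> first | rfl | omega

theorem cons_eq (M : Multiset LType) (Γ : TEnv) : TEnv.cons M Γ = insE 0 M Γ := by
  funext n
  rcases n with _ | n <;> simp [TEnv.cons, insE]

/-! ### Inversion -/

theorem J_var {w : Wt} {x : ℕ} {L : LType} : J w (.var x) L ↔ w = axW x L := by
  constructor
  · rcases w with ⟨Γ, k, n⟩
    rintro ⟨π, h⟩
    dsimp only at π h
    cases π
    simp only [Deriv.size] at h
    subst h
    rfl
  · rintro rfl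
    exact ⟨Deriv.ax x L, by simp [Deriv.size, axW]⟩

theorem J_lam {w : Wt} {p : Player} {t : CTerm} {T : LType} : J w (.lam p t) T ↔
    ∃ (M : List LType) (q : Player) (L : LType), T = .arrow M p q L ∧ J (insW 0 ↑M w) t L := by
  rcases w with ⟨Γ, k, n⟩
  have e : ∀ M : Multiset LType, insW 0 M (Γ, k, n) = (TEnv.cons M Γ, k, n) := by
    intro M
    rw [cons_eq]; rfl
  simp only [e]
  constructor
  · rintro ⟨π, h⟩
    cases π with
    | lam p q M π => exact ⟨M, q, _, rfl, π, by simpa only [Deriv.size] using h⟩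
  · rintro ⟨M, q, L, rfl, π, h⟩
    exact ⟨Deriv.lam p q M π, by simpa only [Deriv.size] using h⟩

theorem app_wt (Γ Δ : TEnv) (k₁ k₂ n₁ n₂ : ℕ) (p q : Player) :
    ((Γ, k₁, n₁) + (Δ, k₂, n₂) + cW p q : Wt) =
      (TEnv.add Γ Δ, k₁ + k₂ + Player.gamma p q, n₁ + n₂ + 1) := by
  refine Prod.ext ?_ rfl
  exact add_zero _

theorem J_app {w : Wt} {q : Player} {t u : CTerm} {L : LType} : J w (.app q t u) L ↔
    ∃ (M : List LType) (p : Player) (w₁ w₂ : Wt), w = w₁ + w₂ + cW p q ∧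
      J w₁ t (.arrow M p q L) ∧ JM w₂ u M := by
  constructor
  · rcases w with ⟨Γ, k, n⟩
    rintro ⟨π, h⟩
    dsimp only at π h
    cases π with
    | app π μ =>
      refine ⟨_, _, (_, _, π.size), (_, _, μ.size), ?_, ⟨π, rfl⟩, ⟨μ, rfl⟩⟩
      simp only [Deriv.size] at h
      subst h
      rw [app_wt]
  · rintro ⟨M, p, ⟨Γ₁, k₁, n₁⟩, ⟨Γ₂, k₂, n₂⟩, rfl, ⟨π, h1⟩, ⟨μ, h2⟩⟩
    dsimp only at π h1 μ h2
    subst h1 h2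
    rw [app_wt]
    exact ⟨Deriv.app π μ, by simp only [Deriv.size]⟩

theorem JM_nil {w : Wt} {t : CTerm} : JM w t [] ↔ w = 0 := by
  constructor
  · rcases w with ⟨Γ, k, n⟩
    rintro ⟨π, h⟩
    dsimp only at π h
    cases π
    simp only [DerivM.size] at h
    subst h
    rfl
  · rintro rfl
    have e : (0 : Wt) = (TEnv.zero, 0, 0) := rfl
    rw [e]
    exact ⟨DerivM.nil t, by simp only [DerivM.size]⟩

theorem JM_cons {w : Wt} {t : CTerm} {L : LType} {M : List LType} : JM w t (L :: M) ↔
    ∃ w₁ w₂ : Wt, w = w₁ + w₂ ∧ J w₁ t L ∧ JM w₂ t M := by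
  constructor
  · rcases w with ⟨Γ, k, n⟩
    rintro ⟨π, h⟩
    dsimp only at π h
    cases π with
    | cons π μ =>
      refine ⟨(_, _, π.size), (_, _, μ.size), ?_, ⟨π, rfl⟩, ⟨μ, rfl⟩⟩
      simp only [DerivM.size] at h
      subst h
      rfl
  · rintro ⟨⟨Γ₁, k₁, n₁⟩, ⟨Γ₂, k₂, n₂⟩, rfl, ⟨π, h1⟩, ⟨μ, h2⟩⟩
    dsimp only at π h1 μ h2
    subst h1 h2
    have e : ((Γ₁, k₁, π.size) + (Γ₂, k₂, μ.size) : Wt) =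
      (TEnv.add Γ₁ Γ₂, k₁ + k₂, π.size + μ.size) := rfl
    rw [e]
    exact ⟨DerivM.cons π μ, by simp only [DerivM.size]⟩

theorem JM_perm {t : CTerm} {M N : List LType} (h : M.Perm N) :
    ∀ {w : Wt}, JM w t M → JM w t N := by
  induction h with
  | nil => exact fun h => h
  | cons L _ ih =>
    intro w hw
    obtain ⟨a, b, rfl, ha, hb⟩ := JM_cons.1 hw
    exact JM_cons.2 ⟨a, b, rfl, ha, ih hb⟩
  | swap L K M =>
    intro w hw
    obtain ⟨a, b, rfl, ha, hb⟩ := JM_cons.1 hw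
    obtain ⟨c, d, rfl, hc, hd⟩ := JM_cons.1 hb
    exact JM_cons.2 ⟨c, a + d, by abel, hc, JM_cons.2 ⟨a, d, rfl, ha, hd⟩⟩
  | trans _ _ ih1 ih2 => exact fun h => ih2 (ih1 h)

theorem JM_append {t : CTerm} {M N : List LType} {w : Wt} : JM w t (M ++ N) ↔
    ∃ w₁ w₂ : Wt, w = w₁ + w₂ ∧ JM w₁ t M ∧ JM w₂ t N := by
  induction M generalizing w with
  | nil =>
    simp only [List.nil_append, JM_nil]
    constructor
    · exact fun h => ⟨0, w, (zero_add w).symm, rfl, h⟩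
    · rintro ⟨_, b, rfl, rfl, h⟩
      rwa [zero_add]
  | cons L M ih =>
    simp only [List.cons_append, JM_cons, ih]
    constructor
    · rintro ⟨a, b, rfl, ha, c, d, rfl, hc, hd⟩
      exact ⟨a + c, d, by abel, ⟨a, c, rfl, ha, hc⟩, hd⟩
    · rintro ⟨_, d, rfl, ⟨a, c, rfl, ha, hc⟩, hd⟩
      exact ⟨a, c + d, by abel, ha, c, d, rfl, hc, hd⟩

/-- Multi type judgments up to permutation. -/
def MJ (w : Wt) (t : CTerm) (m : Multiset LType) : Prop := ∃ M : List LType, ↑M = m ∧ JM w t M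

theorem MJ_coe {w : Wt} {t : CTerm} {M : List LType} : MJ w t ↑M ↔ JM w t M :=
  ⟨fun ⟨_, hN, h⟩ => JM_perm (Multiset.coe_eq_coe.1 hN) h, fun h => ⟨M, rfl, h⟩⟩

theorem MJ_add {w : Wt} {t : CTerm} {m n : Multiset LType} : MJ w t (m + n) ↔
    ∃ w₁ w₂ : Wt, w = w₁ + w₂ ∧ MJ w₁ t m ∧ MJ w₂ t n := by
  induction m using Quotient.inductionOn with
  | h M =>
  induction n using Quotient.inductionOn with
  | h N =>
  have := JM_append (w := w) (t := t) (M := M) (N := N)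
  simpa only [Multiset.quot_mk_to_coe, Multiset.coe_add, MJ_coe] using this

theorem MJ_zero {w : Wt} {t : CTerm} : MJ w t 0 ↔ w = 0 := by
  rw [← Multiset.coe_nil, MJ_coe, JM_nil]

theorem MJ_single {w : Wt} {t : CTerm} {L : LType} : MJ w t {L} ↔ J w t L := by
  rw [← Multiset.coe_singleton, MJ_coe, JM_cons]
  simp [JM_nil]

/-! ### Lifting -/

theorem JM_lift_of {t : CTerm} {d : ℕ}
    (ih : ∀ w L, J w (t.liftAt d) L ↔ ∃ v, w = insW d 0 v ∧ J v t L) (M : List LType) :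
    ∀ w, JM w (t.liftAt d) M ↔ ∃ v, w = insW d 0 v ∧ JM v t M := by
  induction M with
  | nil => intro w; simp [JM_nil, insW_zero]
  | cons L M ihM =>
    intro w
    simp only [JM_cons, ih, ihM]
    constructor
    · rintro ⟨_, _, rfl, ⟨a, rfl, ha⟩, ⟨b, rfl, hb⟩⟩
      exact ⟨a + b, by rw [← insW_add, add_zero], a, b, rfl, ha, hb⟩
    · rintro ⟨_, rfl, a, b, rfl, ha, hb⟩
      exact ⟨_, _, by rw [← insW_add, add_zero], ⟨a, rfl, ha⟩, ⟨b, rfl, hb⟩⟩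

theorem J_lift (t : CTerm) : ∀ (d : ℕ) (w : Wt) (L : LType),
    J w (t.liftAt d) L ↔ ∃ v, w = insW d 0 v ∧ J v t L := by
  induction t with
  | var y =>
    intro d w L
    simp only [CTerm.liftAt, J_var, exists_eq_right]
    split_ifs with h
    · rw [← insW_ax_lt h]
    · rw [← insW_ax_ge (by omega)]
  | lam p t ih =>
    intro d w T
    simp only [CTerm.liftAt, J_lam, ih]
    constructor
    · rintro ⟨M, q, L, rfl, v, hv, h⟩
      obtain ⟨N, v', rfl⟩ := exists_insW 0 v
      rw [insW_comm] at hv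
      obtain ⟨rfl, rfl⟩ := insW_inj hv
      exact ⟨v', rfl, M, q, L, rfl, h⟩
    · rintro ⟨v, rfl, M, q, L, rfl, h⟩
      exact ⟨M, q, L, rfl, _, (insW_comm _ _ _ _).symm, h⟩
  | app q t s iht ihs =>
    intro d w L
    simp only [CTerm.liftAt, J_app, iht, JM_lift_of (ihs d)]
    constructor
    · rintro ⟨M, p, _, _, rfl, ⟨a, rfl, ha⟩, ⟨b, rfl, hb⟩⟩
      exact ⟨a + b + cW p q, by rw [← insW_add_c, add_zero], M, p, a, b, rfl, ha, hb⟩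
    · rintro ⟨_, rfl, M, p, a, b, rfl, ha, hb⟩
      exact ⟨M, p, _, _, by rw [← insW_add_c, add_zero], ⟨a, rfl, ha⟩, ⟨b, rfl, hb⟩⟩

theorem MJ_lift (t : CTerm) (d : ℕ) (w : Wt) (m : Multiset LType) :
    MJ w (t.liftAt d) m ↔ ∃ v, w = insW d 0 v ∧ MJ v t m := by
  induction m using Quotient.inductionOn with
  | h M =>
  simp only [Multiset.quot_mk_to_coe, MJ_coe]
  exact JM_lift_of (J_lift t d) M w

/-! ### Substitution -/

theorem JM_subst_of {t u : CTerm} {x : ℕ}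
    (ih : ∀ w L, J w (t.subst x u) L ↔
      ∃ m a b, w = a + b ∧ J (insW x m a) t L ∧ MJ b u m) (M : List LType) :
    ∀ w, JM w (t.subst x u) M ↔
      ∃ m a b, w = a + b ∧ JM (insW x m a) t M ∧ MJ b u m := by
  induction M with
  | nil =>
    intro w
    simp only [JM_nil]
    constructor
    · rintro rfl
      exact ⟨0, 0, 0, by simp, insW_zero x, MJ_zero.2 rfl⟩
    · rintro ⟨m, a, b, rfl, h, hb⟩
      rw [← insW_zero x] at h
      obtain ⟨rfl, rfl⟩ := insW_inj h
      rw [MJ_zero.1 hb, add_zero]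
  | cons L M ihM =>
    intro w
    simp only [JM_cons, ih, ihM]
    constructor
    · rintro ⟨_, _, rfl, ⟨m1, a1, b1, rfl, h1, k1⟩, ⟨m2, a2, b2, rfl, h2, k2⟩⟩
      exact ⟨m1 + m2, a1 + a2, b1 + b2, by abel, ⟨_, _, insW_add _ _ _ _ _, h1, h2⟩,
        MJ_add.2 ⟨b1, b2, rfl, k1, k2⟩⟩
    · rintro ⟨m, a, b, rfl, ⟨w1, w2, hw, h1, h2⟩, hb⟩
      obtain ⟨m1, a1, rfl⟩ := exists_insW x w1
      obtain ⟨m2, a2, rfl⟩ := exists_insW x w2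
      rw [← insW_add] at hw
      obtain ⟨rfl, rfl⟩ := insW_inj hw
      obtain ⟨b1, b2, rfl, k1, k2⟩ := MJ_add.1 hb
      exact ⟨a1 + b1, a2 + b2, by abel, ⟨m1, a1, b1, rfl, h1, k1⟩, ⟨m2, a2, b2, rfl, h2, k2⟩⟩

theorem J_subst (t : CTerm) : ∀ (x : ℕ) (u : CTerm) (w : Wt) (L : LType),
    J w (t.subst x u) L ↔ ∃ m a b, w = a + b ∧ J (insW x m a) t L ∧ MJ b u m := by
  induction t with
  | var y =>
    intro x u w L
    have key : ∀ m0 a0, axW y L = insW x m0 a0 →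
        ((∃ m a b, w = a + b ∧ J (insW x m a) (.var y) L ∧ MJ b u m) ↔
          ∃ b, w = a0 + b ∧ MJ b u m0) := by
      intro m0 a0 h
      simp only [J_var, h]
      constructor
      · rintro ⟨m, a, b, rfl, e, hb⟩
        obtain ⟨rfl, rfl⟩ := insW_inj e
        exact ⟨b, rfl, hb⟩
      · rintro ⟨b, rfl, hb⟩
        exact ⟨m0, a0, b, rfl, rfl, hb⟩
    simp only [CTerm.subst]
    split_ifs with h1 h2
    · subst h1
      rw [key _ _ (insW_ax_self y L)]
      simp [MJ_single]
    · obtain ⟨z, rfl⟩ : ∃ z, y = z + 1 := ⟨y - 1, by omega⟩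
      rw [key _ _ (insW_ax_ge (by omega) L)]
      simp [MJ_zero, J_var]
    · rw [key _ _ (insW_ax_lt (by omega) L)]
      simp [MJ_zero, J_var]
  | lam p t ih =>
    intro x u w T
    simp only [CTerm.subst, J_lam, ih, MJ_lift]
    constructor
    · rintro ⟨M, q, L, rfl, m, a, _, hw, ha, b, rfl, hb⟩
      obtain ⟨N, a', rfl⟩ := exists_insW 0 a
      rw [← insW_add, add_zero] at hw
      obtain ⟨rfl, rfl⟩ := insW_inj hw
      rw [insW_comm] at ha
      exact ⟨m, a', b, rfl, ⟨M, q, L, rfl, ha⟩, hb⟩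
    · rintro ⟨m, a, b, rfl, ⟨M, q, L, rfl, ha⟩, hb⟩
      refine ⟨M, q, L, rfl, m, insW 0 M a, _, ?_, ?_, b, rfl, hb⟩
      · rw [← insW_add, add_zero]
      · rwa [insW_comm]
  | app q t s iht ihs =>
    intro x u w L
    simp only [CTerm.subst, J_app, iht, JM_subst_of (ihs x u)]
    constructor
    · rintro ⟨M, p, _, _, rfl, ⟨m1, a1, b1, rfl, h1, k1⟩, ⟨m2, a2, b2, rfl, h2, k2⟩⟩
      exact ⟨m1 + m2, a1 + a2 + cW p q, b1 + b2, by abel,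
        ⟨M, p, _, _, insW_add_c _ _ _ _ _ _ _, h1, h2⟩, MJ_add.2 ⟨b1, b2, rfl, k1, k2⟩⟩
    · rintro ⟨m, a, b, rfl, ⟨M, p, w1, w2, hw, h1, h2⟩, hb⟩
      obtain ⟨m1, a1, rfl⟩ := exists_insW x w1
      obtain ⟨m2, a2, rfl⟩ := exists_insW x w2
      rw [← insW_add_c] at hw
      obtain ⟨rfl, rfl⟩ := insW_inj hw
      obtain ⟨b1, b2, rfl, k1, k2⟩ := MJ_add.1 hb
      exact ⟨M, p, a1 + b1, a2 + b2, by abel, ⟨m1, a1, b1, rfl, h1, k1⟩,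
        ⟨m2, a2, b2, rfl, h2, k2⟩⟩

/-! ### Head steps -/

theorem J_beta (p q : Player) (t u : CTerm) (w : Wt) (L : LType) :
    J w (.app q (.lam p t) u) L ↔ ∃ v, w = v + cW p q ∧ J v (t.subst 0 u) L := by
  simp only [J_app, J_lam, J_subst, ← MJ_coe]
  constructor
  · rintro ⟨M, p', a, b, rfl, ⟨M', q', L', e, ha⟩, hb⟩
    cases e
    exact ⟨a + b, rfl, ↑M, a, b, rfl, ha, hb⟩
  · rintro ⟨_, rfl, m, a, b, rfl, ha, hb⟩
    obtain ⟨M, rfl, hM⟩ := hb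
    exact ⟨M, p, a, b, rfl, ⟨M, q, L, rfl, ha⟩, MJ_coe.2 hM⟩

theorem J_spine {R : CTerm → CTerm → Prop} {c : Wt}
    (hR : ∀ t t', R t t' → ∀ w L, J w t L ↔ ∃ v, w = v + c ∧ J v t' L)
    {t t' : CTerm} (h : CSpine R t t') : ∀ w L, J w t L ↔ ∃ v, w = v + c ∧ J v t' L := by
  induction h with
  | root h => exact hR _ _ h
  | appL q u _ ih =>
    intro w L
    simp only [J_app, ih]
    constructor
    · rintro ⟨M, p, _, b, rfl, ⟨a, rfl, ha⟩, hb⟩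
      exact ⟨a + b + cW p q, by abel, M, p, a, b, rfl, ha, hb⟩
    · rintro ⟨_, rfl, M, p, a, b, rfl, ha, hb⟩
      exact ⟨M, p, _, b, by abel, ⟨a, rfl, ha⟩, hb⟩

theorem J_head {R : CTerm → CTerm → Prop} {c : Wt} (hc : ∀ x, insW x 0 c = c)
    (hR : ∀ t t', R t t' → ∀ w L, J w t L ↔ ∃ v, w = v + c ∧ J v t' L)
    {t t' : CTerm} (h : CHead R t t') : ∀ w L, J w t L ↔ ∃ v, w = v + c ∧ J v t' L := by
  induction h with
  | spine h => exact J_spine hR h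
  | lam p _ ih =>
    intro w T
    simp only [J_lam, ih]
    constructor
    · rintro ⟨M, q, L, rfl, v, hv, h⟩
      obtain ⟨N, v', rfl⟩ := exists_insW 0 v
      rw [← hc 0, ← insW_add, add_zero] at hv
      obtain ⟨rfl, rfl⟩ := insW_inj hv
      exact ⟨v', rfl, M, q, L, rfl, h⟩
    · rintro ⟨v, rfl, M, q, L, rfl, h⟩
      refine ⟨M, q, L, rfl, _, ?_, h⟩
      conv_rhs => rw [← hc 0, ← insW_add, add_zero]

def tauW : Wt := (0, 0, 1)
def intW : Wt := (0, 1, 1)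

theorem cW_self (p : Player) : cW p p = tauW := by simp [cW, tauW, Player.gamma]
theorem cW_op (p : Player) : cW p p.op = intW := by
  cases p <;> simp [cW, intW, Player.gamma, Player.op]

theorem J_tau {t t' : CTerm} (h : HStepTau t t') (w : Wt) (L : LType) :
    J w t L ↔ ∃ v, w = v + tauW ∧ J v t' L := by
  refine J_head (fun x => ?_) ?_ h w L
  · rw [← cW_self .white, insW_c]
  · rintro _ _ ⟨p, t, u⟩ w L
    rw [J_beta, cW_self]

theorem J_int {t t' : CTerm} (h : HStepInt t t') (w : Wt) (L : LType) :
    J w t L ↔ ∃ v, w = v + intW ∧ J v t' L := by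
  refine J_head (fun x => ?_) ?_ h w L
  · rw [← cW_op .white, insW_c]
  · rintro _ _ ⟨p, t, u⟩ w L
    rw [J_beta, cW_op]

theorem spine_not_lam {R : CTerm → CTerm → Prop} (hR : ∀ p t u, ¬ R (.lam p t) u)
    {p : Player} {t u : CTerm} : ¬ CSpine R (.lam p t) u := by
  intro h
  cases h with
  | root h => exact hR _ _ _ h

theorem silent_not_lam (p : Player) (t u : CTerm) : ¬ SilentRoot (.lam p t) u := nofun
theorem inter_not_lam (p : Player) (t u : CTerm) : ¬ InterRoot (.lam p t) u := nofun

theorem spine_excl {t t' : CTerm} (h : CSpine SilentRoot t t') :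
    ∀ t'', ¬ CSpine InterRoot t t'' := by
  induction h with
  | root h =>
    rcases h with ⟨p, t, u⟩
    intro t'' h2
    cases h2 with
    | root h2 =>
      generalize hr : CTerm.app p (.lam p t) u = r at h2
      rcases h2 with ⟨p', t, u⟩
      cases p' <;> cases p <;> simp [Player.op] at hr
    | appL _ _ h2 => exact spine_not_lam inter_not_lam h2
  | appL q u h ih =>
    intro t'' h2
    cases h2 with
    | root h2 =>
      cases h2
      exact spine_not_lam silent_not_lam h
    | appL _ _ h2 => exact ih _ h2

theorem head_excl {t t' : CTerm} (h : HStepTau t t') : ∀ t'', ¬ HStepInt t t'' := by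
  unfold HStepTau at h
  unfold HStepInt
  induction h with
  | spine h =>
    intro t'' h2
    cases h2 with
    | spine h2 => exact spine_excl h _ h2
    | lam p h2 => exact spine_not_lam silent_not_lam h
  | lam p h ih =>
    intro t'' h2
    cases h2 with
    | spine h2 => exact spine_not_lam inter_not_lam h2
    | lam p h2 => exact ih _ h2

/-- Quantitative subject reduction and subject expansion for checkers multi types,
along a checkers head step `t →hch t'`. -/
theorem checkers_subject_reduction_and_expansion (t t' : CTerm) (h : HStepCh t t') :
    (∀ (Γ : TEnv) (k : ℕ) (L : LType) (π : Deriv Γ k t L),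
      ∃ (k' : ℕ) (π' : Deriv Γ k' t' L),
        π'.size + 1 = π.size ∧
        (HStepTau t t' → k' = k) ∧
        (HStepInt t t' → k' + 1 = k)) ∧
    (∀ (Γ : TEnv) (k' : ℕ) (L : LType), Nonempty (Deriv Γ k' t' L) →
      ∃ k : ℕ, Nonempty (Deriv Γ k t L)) := by
  rcases h with h | h
  · constructor
    · intro Γ k L π
      obtain ⟨⟨Γ', k', n'⟩, e, π', hs⟩ := (J_tau h (Γ, k, π.size) L).1 ⟨π, rfl⟩
      dsimp only at π' hs
      simp only [tauW, Prod.mk_add_mk, Prod.mk.injEq, add_zero] at e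
      obtain ⟨rfl, rfl, e⟩ := e
      exact ⟨k, π', by omega, fun _ => rfl, fun h2 => (head_excl h _ h2).elim⟩
    · rintro Γ k' L ⟨π'⟩
      obtain ⟨π, -⟩ := (J_tau h ((Γ, k', π'.size) + tauW) L).2 ⟨_, rfl, π', rfl⟩
      simp only [tauW, Prod.mk_add_mk, add_zero] at π
      exact ⟨_, ⟨π⟩⟩
  · constructor
    · intro Γ k L π
      obtain ⟨⟨Γ', k', n'⟩, e, π', hs⟩ := (J_int h (Γ, k, π.size) L).1 ⟨π, rfl⟩
      dsimp only at π' hs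
      simp only [intW, Prod.mk_add_mk, Prod.mk.injEq, add_zero] at e
      obtain ⟨rfl, e1, e⟩ := e
      exact ⟨k', π', by omega, fun h2 => (head_excl h2 _ h).elim, fun _ => e1.symm⟩
    · rintro Γ k' L ⟨π'⟩
      obtain ⟨π, -⟩ := (J_int h ((Γ, k', π'.size) + intW) L).2 ⟨_, rfl, π', rfl⟩
      simp only [intW, Prod.mk_add_mk, add_zero] at π
      exact ⟨_, ⟨π⟩⟩
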